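/- arXiv:1803.06491 — 3 statements merged into one kernel-verified Lean document; each statement's English description precedes it below -/
import Mathlib

section
/- Let (ℓ, r, σ) ∈ Σ^sym_N and λ ∈ ℂ^×, and define G = Σ_{r<i<σ(r)} λ E_{ii} + Σ_{ℓ<i≤r} ( E_{i,σ(i)} + E_{σ(i),i} + (λ−λ^{-1}) E_{σ(i),σ(i)} ) and Q = Σ_{1≤i≤ℓ} E_{ii}. Set Ř_q = P R_q. Then the following four identities hold in End(ℂ^N⊗ℂ^N): Ř_q G2 Ř_q G2 = G2 Ř_q G2 Ř_q; Ř_q G2 Ř_q Q2 = Q2 Ř_q G2 Ř_q; Ř_q Q2 Ř_q Q2 − Q2 Ř_q Q2 Ř_q = (q−q^{-1})(Ř_q Q2 − Q2 Ř_q); and Ř_q Q2 Ř_q G2 − G2 Ř_q Q2 Ř_q = (q−q^{-1})(Q2 Ř_q G2 − G2 Ř_q Q2). -/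
/-!
Every factor has a sparse action on rows. Row `(a, b)` of `Ř_q X` is a combination of the rows
`(b, a)` and `(a, b)` of `X` (`braid_mul_apply`), row `(a, b)` of `G2 X` is a combination of the rows
`(a, σ(b))` and `(a, b)` (`M2_Gsym_mul_apply`), and `Q2` is diagonal. So each identity, applied to an
arbitrary `X` and read off in row `(a, b)`, only involves rows with labels in
`{a, b, σ(a), σ(b)}`. The coefficients depend on the order of these labels and on the kinds of the
rows `a` and `b` of `G` (`row_cases`). Since `σ` reverses the order on the indices it moves, only a few
configurations occur, and in each of them the claim is a rational identity in `q` and `λ`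
(`braid_identities_apply`).
-/

open Matrix
open scoped Kronecker

noncomputable section

/-- 1-based matrix unit `E_{a b}` in the `N × N` complex matrices. -/
def Em (N : ℕ) (a b : ℕ) : Matrix (Fin N) (Fin N) ℂ :=
  Matrix.of fun i j => if (i : ℕ) + 1 = a ∧ (j : ℕ) + 1 = b then 1 else 0

/-- The flip (permutation) operator `P = Σ_{i,j} E_{ij} ⊗ E_{ji}`. -/
def Pmat (N : ℕ) : Matrix (Fin N × Fin N) (Fin N × Fin N) ℂ :=
  ∑ i ∈ Finset.Icc 1 N, ∑ j ∈ Finset.Icc 1 N, Em N i j ⊗ₖ Em N j i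

/-- The constant R-matrix `R_q`. -/
def Rconst (N : ℕ) (q : ℂ) : Matrix (Fin N × Fin N) (Fin N × Fin N) ℂ :=
  (∑ i ∈ Finset.Icc 1 N, ∑ j ∈ Finset.Icc 1 N,
      (if i = j then q else 1) • (Em N i i ⊗ₖ Em N j j))
    + ∑ i ∈ Finset.Icc 1 N, ∑ j ∈ Finset.Icc 1 N,
        (if i < j then q - q⁻¹ else 0) • (Em N i j ⊗ₖ Em N j i)

/-- `f_q(u) = 1/(q - q⁻¹ u)`. -/
def fBJ (q u : ℂ) : ℂ := (q - q⁻¹ * u)⁻¹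

/-- The Bazhanov–Jimbo R-matrix `R(u) = f_q(u) R_q + f_{q⁻¹}(u⁻¹) P R_{q⁻¹} P`. -/
def RBJ (N : ℕ) (q u : ℂ) : Matrix (Fin N × Fin N) (Fin N × Fin N) ℂ :=
  fBJ q u • Rconst N q + fBJ q⁻¹ u⁻¹ • (Pmat N * Rconst N q⁻¹ * Pmat N)

/-- `X1 = X ⊗ I`. -/
def M1 (N : ℕ) (X : Matrix (Fin N) (Fin N) ℂ) : Matrix (Fin N × Fin N) (Fin N × Fin N) ℂ :=
  X ⊗ₖ (1 : Matrix (Fin N) (Fin N) ℂ)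

/-- `X2 = I ⊗ X`. -/
def M2 (N : ℕ) (X : Matrix (Fin N) (Fin N) ℂ) : Matrix (Fin N × Fin N) (Fin N × Fin N) ℂ :=
  (1 : Matrix (Fin N) (Fin N) ℂ) ⊗ₖ X

/-- `R21(u) = P R(u) P`. -/
def R21 (N : ℕ) (q u : ℂ) : Matrix (Fin N × Fin N) (Fin N × Fin N) ℂ :=
  Pmat N * RBJ N q u * Pmat N

/-- Transposition in the first tensor factor. -/
def t1 (N : ℕ) (X : Matrix (Fin N × Fin N) (Fin N × Fin N) ℂ) :
    Matrix (Fin N × Fin N) (Fin N × Fin N) ℂ :=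
  Matrix.of fun p r => X (r.1, p.2) (p.1, r.2)

/-- The charge conjugation matrix `C = Σ_i (-q)^i E_{ī i}` where `ī = N+1-i`. -/
def Cmat (N : ℕ) (q : ℂ) : Matrix (Fin N) (Fin N) ℂ :=
  ∑ i ∈ Finset.Icc 1 N, (-q) ^ i • Em N (N + 1 - i) i

/-- The C-conjugated R-matrix `R^∨(u) = C2⁻¹ R^{t1}(q̃² u⁻¹) C2` with `q̃ = s^N`. -/
def Rvee (N : ℕ) (q s u : ℂ) : Matrix (Fin N × Fin N) (Fin N × Fin N) ℂ :=
  (M2 N (Cmat N q))⁻¹ * t1 N (RBJ N q ((s ^ N) ^ 2 * u⁻¹)) * M2 N (Cmat N q)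

/-- `R^∨21(u) = P R^∨(u) P`. -/
def Rvee21 (N : ℕ) (q s u : ℂ) : Matrix (Fin N × Fin N) (Fin N × Fin N) ℂ :=
  Pmat N * Rvee N q s u * Pmat N

/-- The untwisted reflection equation at spectral parameters `(u, v)`. -/
def REeq (N : ℕ) (q : ℂ) (K : ℂ → Matrix (Fin N) (Fin N) ℂ) (u v : ℂ) : Prop :=
  R21 N q (u / v) * M1 N (K u) * RBJ N q (u * v) * M2 N (K v)
    = M2 N (K v) * R21 N q (u * v) * M1 N (K u) * RBJ N q (u / v)

/-- `K` satisfies the untwisted reflection equation (RE) for all `u, v`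
for which all factors are defined. -/
def IsRESol (N : ℕ) (q : ℂ) (K : ℂ → Matrix (Fin N) (Fin N) ℂ) : Prop :=
  ∀ u v : ℂ, u ≠ 0 → v ≠ 0 → u / v ≠ q ^ 2 → u / v ≠ q⁻¹ ^ 2 →
    u * v ≠ q ^ 2 → u * v ≠ q⁻¹ ^ 2 → REeq N q K u v

/-- The cross-conjugated twisted reflection equation at `(u, v)`. -/
def CtREeq (N : ℕ) (q s : ℂ) (K : ℂ → Matrix (Fin N) (Fin N) ℂ) (u v : ℂ) : Prop :=
  R21 N q (u / v) * M1 N (K u) * Rvee N q s (u * v) * M2 N (K v)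
    = M2 N (K v) * Rvee21 N q s (u * v) * M1 N (K u) * RBJ N q (u / v)

/-- `K` satisfies the cross-conjugated twisted reflection equation (CtRE) for all
`u, v` for which all factors are defined. -/
def IsCtRESol (N : ℕ) (q s : ℂ) (K : ℂ → Matrix (Fin N) (Fin N) ℂ) : Prop :=
  ∀ u v : ℂ, u ≠ 0 → v ≠ 0 → u / v ≠ q ^ 2 → u / v ≠ q⁻¹ ^ 2 →
    (s ^ N) ^ 2 * (u * v)⁻¹ ≠ q ^ 2 → (s ^ N) ^ 2 * (u * v)⁻¹ ≠ q⁻¹ ^ 2 →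
    CtREeq N q s K u v

/-- Transposition across the antidiagonal: `(M^w)_{ij} = M_{N+1-j, N+1-i}`. -/
def wT (N : ℕ) (M : Matrix (Fin N) (Fin N) ℂ) : Matrix (Fin N) (Fin N) ℂ :=
  Matrix.of fun i j => M (Fin.rev j) (Fin.rev i)

/-- The involution `σ` of `{1, …, N}` attached to `(ℓ, r) ∈ Σ^sym_N`. -/
def sigSym (N ℓ r i : ℕ) : ℕ :=
  if (ℓ < i ∧ i ≤ r) ∨ (N + ℓ + 1 - r ≤ i ∧ i ≤ N) then N + ℓ + 1 - i else i

/-- `G = Σ_{r<i<σ(r)} λ E_{ii} + Σ_{ℓ<i≤r} ( E_{i,σ(i)} + E_{σ(i),i} + (λ-λ⁻¹) E_{σ(i),σ(i)} )`. -/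
def Gsym (N ℓ r : ℕ) (lam : ℂ) : Matrix (Fin N) (Fin N) ℂ :=
  (∑ i ∈ Finset.Ioo r (sigSym N ℓ r r), lam • Em N i i)
    + ∑ i ∈ Finset.Icc (ℓ + 1) r,
        (Em N i (sigSym N ℓ r i) + Em N (sigSym N ℓ r i) i
          + (lam - lam⁻¹) • Em N (sigSym N ℓ r i) (sigSym N ℓ r i))

/-- `Q = Σ_{1≤i≤ℓ} E_{ii}`. -/
def Qsym (N ℓ : ℕ) : Matrix (Fin N) (Fin N) ℂ :=
  ∑ i ∈ Finset.Icc 1 ℓ, Em N i i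

/-! ### Rows of the factors -/

lemma sum_ite_single (s : Finset ℕ) (p : ℕ → Prop) [DecidablePred p] (C : Prop) [Decidable C]
    (k : ℕ) (c : ℂ) (h : ∀ i ∈ s, (p i ↔ k = i ∧ C)) :
    ∑ i ∈ s, (if p i then c else 0) = if k ∈ s ∧ C then c else 0 := by
  have h1 : ∀ i ∈ s, (if p i then c else 0) = if k = i then (if C then c else 0) else 0 := by
    intro i hi
    rw [← ite_and]
    exact if_congr (h i hi) rfl rfl
  rw [Finset.sum_congr rfl h1, Finset.sum_ite_eq, ← ite_and]

/-- The reflection of the block `{ℓ, …, N-1}` of the 0-based indices; it agrees with the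
involution `σ` on the rows of `G` that have an off-diagonal entry. -/
def blockRefl (N ℓ : ℕ) (i : Fin N) : Fin N :=
  ⟨if ℓ ≤ i then N + ℓ - 1 - i else i, by split_ifs <;> omega⟩

/-- The coefficient of `E_{i,σ(i)}` with `σ(i) ≠ i` in `G`; it is zero if `σ` fixes `i`. -/
def gOff (N ℓ r : ℕ) (i : Fin N) : ℂ :=
  if (ℓ ≤ (i : ℕ) ∧ (i : ℕ) < r) ∨ N + ℓ ≤ i + r then 1 else 0

/-- The diagonal entry of `G` in row `i`. -/
def gDiag (N ℓ r : ℕ) (lam : ℂ) (i : Fin N) : ℂ :=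
  if r ≤ (i : ℕ) then (if N + ℓ ≤ i + r then lam - lam⁻¹ else lam) else 0

lemma Gsym_apply (N ℓ r : ℕ) (lam : ℂ) (hlr : ℓ < r) (hr : 2 * r ≤ N + ℓ) (i j : Fin N) :
    Gsym N ℓ r lam i j = (if blockRefl N ℓ i = j then gOff N ℓ r i else 0)
      + (if i = j then gDiag N ℓ r lam i else 0) := by
  have hsr : ∀ k ∈ Finset.Icc (ℓ + 1) r, sigSym N ℓ r k = N + ℓ + 1 - k := by
    intro k hk
    rw [Finset.mem_Icc] at hk
    rw [sigSym, if_pos (by omega)]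
  have hi := i.2
  have hj := j.2
  rw [Gsym, hsr r (by rw [Finset.mem_Icc]; omega)]
  simp only [Matrix.add_apply, Matrix.sum_apply, Matrix.smul_apply, Em, Matrix.of_apply,
    smul_eq_mul, mul_ite, mul_one, mul_zero, Finset.sum_add_distrib]
  rw [sum_ite_single _ _ (j = i) (i + 1),
    sum_ite_single _ _ ((j : ℕ) + i + 1 = N + ℓ) (i + 1),
    sum_ite_single _ _ ((j : ℕ) + i + 1 = N + ℓ) (j + 1),
    sum_ite_single _ _ (j = i) (N + ℓ - i)]
  · simp only [Finset.mem_Ioo, Finset.mem_Icc, blockRefl, gOff, gDiag, Fin.ext_iff]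
    split_ifs <;> first | omega | ring
  all_goals
    intro k hk
    first | rw [hsr k hk] | skip
    first | rw [Finset.mem_Ioo] at hk | rw [Finset.mem_Icc] at hk
    try rw [Fin.ext_iff]
    omega

lemma Qsym_apply (N ℓ : ℕ) (i j : Fin N) :
    Qsym N ℓ i j = if i = j then (if (i : ℕ) < ℓ then 1 else 0) else 0 := by
  simp only [Qsym, Matrix.sum_apply, Em, Matrix.of_apply]
  rw [sum_ite_single _ _ (j = i) (i + 1)]
  · simp only [Finset.mem_Icc, Fin.ext_iff]
    split_ifs <;> first | omega | rfl
  · intro k hk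
    simp only [Fin.ext_iff]
    omega

lemma sum_Icc_ite (N : ℕ) (k : Fin N) (f : ℕ → ℂ) :
    ∑ i ∈ Finset.Icc 1 N, (if (k : ℕ) + 1 = i then f i else 0) = f (k + 1) := by
  rw [Finset.sum_ite_eq, if_pos (by rw [Finset.mem_Icc]; omega)]

lemma Pmat_apply (N : ℕ) (a b c d : Fin N) :
    Pmat N (a, b) (c, d) = if a = d ∧ b = c then 1 else 0 := by
  have h : ∀ i j : ℕ, (Em N i j ⊗ₖ Em N j i) (a, b) (c, d)
      = if (b : ℕ) + 1 = j then (if (a : ℕ) + 1 = i then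
          (if a = d ∧ b = c then 1 else 0) else 0) else 0 := by
    intro i j
    simp only [Matrix.kroneckerMap_apply, Em, Matrix.of_apply, Fin.ext_iff]
    split_ifs <;> first | omega | simp
  simp only [Pmat, Matrix.sum_apply, h, sum_Icc_ite]

lemma Rconst_apply (N : ℕ) (q : ℂ) (a b c d : Fin N) :
    Rconst N q (a, b) (c, d) = (if a = c ∧ b = d then (if a = b then q else 1) else 0)
      + (if a = d ∧ b = c then (if a < b then q - q⁻¹ else 0) else 0) := by
  have h1 : ∀ i j : ℕ, (if i = j then q else 1) * (Em N i i ⊗ₖ Em N j j) (a, b) (c, d)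
      = if (b : ℕ) + 1 = j then (if (a : ℕ) + 1 = i then
          (if a = c ∧ b = d then (if a = b then q else 1) else 0) else 0) else 0 := by
    intro i j
    simp only [Matrix.kroneckerMap_apply, Em, Matrix.of_apply, Fin.ext_iff]
    split_ifs <;> first | omega | simp
  have h2 : ∀ i j : ℕ, (if i < j then q - q⁻¹ else 0) * (Em N i j ⊗ₖ Em N j i) (a, b) (c, d)
      = if (b : ℕ) + 1 = j then (if (a : ℕ) + 1 = i then
          (if a = d ∧ b = c then (if a < b then q - q⁻¹ else 0) else 0) else 0) else 0 := by
    intro i j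
    simp only [Matrix.kroneckerMap_apply, Em, Matrix.of_apply, Fin.ext_iff, Fin.lt_def]
    split_ifs <;> first | omega | simp
  simp only [Rconst, Matrix.add_apply, Matrix.sum_apply, Matrix.smul_apply, smul_eq_mul, h1, h2,
    sum_Icc_ite]

lemma Pmat_mul_apply (N : ℕ) (X : Matrix (Fin N × Fin N) (Fin N × Fin N) ℂ) (a b : Fin N)
    (s : Fin N × Fin N) : (Pmat N * X) (a, b) s = X (b, a) s := by
  rw [Matrix.mul_apply, Finset.sum_eq_single (b, a)]
  · simp [Pmat_apply]
  · rintro ⟨c, d⟩ - h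
    rw [Pmat_apply, if_neg, zero_mul]
    rintro ⟨rfl, rfl⟩
    exact h rfl
  · simp

/-- Row `(a, b)` of `Ř_q X`: it involves only the rows `(a, b)` and `(b, a)` of `X`. -/
lemma braid_mul_apply (N : ℕ) (q : ℂ) (X : Matrix (Fin N × Fin N) (Fin N × Fin N) ℂ)
    (a b : Fin N) (s : Fin N × Fin N) :
    (Pmat N * (Rconst N q * X)) (a, b) s = (if (a : ℕ) = b then q else 1) * X (b, a) s
      + (if (b : ℕ) < a then q - q⁻¹ else 0) * X (a, b) s := by
  rw [Pmat_mul_apply, Matrix.mul_apply, Fintype.sum_prod_type]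
  simp only [Rconst_apply, add_mul, Finset.sum_add_distrib, ite_mul, zero_mul, ite_and,
    Finset.sum_ite_irrel, Finset.sum_const_zero, Finset.sum_ite_eq, Finset.mem_univ, if_true,
    Fin.lt_def]
  simp only [Fin.ext_iff, eq_comm (a := (b : ℕ))]

lemma M2_mul_apply (N : ℕ) (Y : Matrix (Fin N) (Fin N) ℂ)
    (X : Matrix (Fin N × Fin N) (Fin N × Fin N) ℂ) (a b : Fin N) (s : Fin N × Fin N) :
    (M2 N Y * X) (a, b) s = ∑ d, Y b d * X (a, d) s := by
  rw [Matrix.mul_apply, Fintype.sum_prod_type, Finset.sum_eq_single a]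
  · simp [M2]
  · intro c _ h
    simp [M2, h.symm]
  · simp

lemma M2_Gsym_mul_apply (N ℓ r : ℕ) (lam : ℂ) (hlr : ℓ < r) (hr : 2 * r ≤ N + ℓ)
    (X : Matrix (Fin N × Fin N) (Fin N × Fin N) ℂ) (a b : Fin N) (s : Fin N × Fin N) :
    (M2 N (Gsym N ℓ r lam) * X) (a, b) s
      = gOff N ℓ r b * X (a, blockRefl N ℓ b) s + gDiag N ℓ r lam b * X (a, b) s := by
  simp [M2_mul_apply, Gsym_apply N ℓ r lam hlr hr, add_mul, Finset.sum_add_distrib]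

lemma M2_Qsym_mul_apply (N ℓ : ℕ)
    (X : Matrix (Fin N × Fin N) (Fin N × Fin N) ℂ) (a b : Fin N) (s : Fin N × Fin N) :
    (M2 N (Qsym N ℓ) * X) (a, b) s = (if (b : ℕ) < ℓ then 1 else 0) * X (a, b) s := by
  simp [M2_mul_apply, Qsym_apply]

/-! ### The identities row by row -/

/-- The four kinds of rows of `G`, in increasing order: zero rows, the lower elements of the pairs
exchanged by `σ`, the diagonal middle rows, and the upper elements of the pairs. -/
lemma row_cases (N ℓ r : ℕ) (lam : ℂ) (hlr : ℓ < r) (hr : 2 * r ≤ N + ℓ) (i : Fin N) :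
    ((i : ℕ) < ℓ ∧ gOff N ℓ r i = 0 ∧ gDiag N ℓ r lam i = 0) ∨
    (ℓ ≤ (i : ℕ) ∧ (i : ℕ) < r ∧ (i : ℕ) + blockRefl N ℓ i + 1 = N + ℓ ∧
      blockRefl N ℓ (blockRefl N ℓ i) = i ∧ gOff N ℓ r i = 1 ∧ gOff N ℓ r (blockRefl N ℓ i) = 1 ∧
      gDiag N ℓ r lam i = 0 ∧ gDiag N ℓ r lam (blockRefl N ℓ i) = lam - lam⁻¹) ∨
    (r ≤ (i : ℕ) ∧ (i : ℕ) + r < N + ℓ ∧ gOff N ℓ r i = 0 ∧ gDiag N ℓ r lam i = lam) ∨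
    (N + ℓ ≤ (i : ℕ) + r ∧ (i : ℕ) + blockRefl N ℓ i + 1 = N + ℓ ∧
      blockRefl N ℓ (blockRefl N ℓ i) = i ∧ gOff N ℓ r i = 1 ∧ gOff N ℓ r (blockRefl N ℓ i) = 1 ∧
      gDiag N ℓ r lam i = lam - lam⁻¹ ∧ gDiag N ℓ r lam (blockRefl N ℓ i) = 0) := by
  have hi := i.2
  have hv : ℓ ≤ (i : ℕ) → (i : ℕ) + blockRefl N ℓ i + 1 = N + ℓ := by
    intro h
    simp only [blockRefl, if_pos h]
    omega
  have hinv : ℓ ≤ (i : ℕ) → blockRefl N ℓ (blockRefl N ℓ i) = i := by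
    intro h
    ext
    have h2 : ℓ ≤ (blockRefl N ℓ i : ℕ) := by have := hv h; omega
    have h3 := hv h
    rw [blockRefl, Fin.val_mk, if_pos h2]
    omega
  by_cases h1 : (i : ℕ) < ℓ
  · left
    simp (disch := omega) only [gOff, gDiag, if_neg, h1, and_true]
  have h4 := hv (by omega)
  by_cases h2 : (i : ℕ) < r
  · right; left
    refine ⟨by omega, h2, h4, hinv (by omega), ?_⟩
    simp (disch := omega) only [gOff, gDiag, if_neg, if_pos, and_true]
  by_cases h3 : (i : ℕ) + r < N + ℓ
  · right; right; left
    refine ⟨by omega, h3, ?_⟩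
    simp (disch := omega) only [gOff, gDiag, if_neg, if_pos, and_true]
  · right; right; right
    refine ⟨by omega, h4, hinv (by omega), ?_⟩
    simp (disch := omega) only [gOff, gDiag, if_neg, if_pos, and_true]

set_option maxHeartbeats 4000000 in
/-- The entrywise form of the four identities, with a free matrix `X` on the right so that every
factor acts by its row formula. The cases are the kinds of the rows `a`, `b` of `G` and the relative
order of `a` and `b`, and of `σ(a)` and `b` when `a` lies in a pair exchanged by `σ`; these decide
all coefficients, since `σ` reverses the order on the paired indices. -/
lemma braid_identities_apply (N : ℕ) (q : ℂ) (hq : q ≠ 0) (ℓ r : ℕ)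
    (hlr : ℓ < r) (hr : 2 * r ≤ N + ℓ) (lam : ℂ) (hlam : lam ≠ 0) (X : Matrix (Fin N × Fin N) (Fin N × Fin N) ℂ)
    (a b : Fin N) (s : Fin N × Fin N) :
    (Pmat N * (Rconst N q * (M2 N (Gsym N ℓ r lam) * (Pmat N * (Rconst N q *
        (M2 N (Gsym N ℓ r lam) * X)))))) (a, b) s
      = (M2 N (Gsym N ℓ r lam) * (Pmat N * (Rconst N q * (M2 N (Gsym N ℓ r lam) *
        (Pmat N * (Rconst N q * X)))))) (a, b) s ∧
    (Pmat N * (Rconst N q * (M2 N (Gsym N ℓ r lam) * (Pmat N * (Rconst N q *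
        (M2 N (Qsym N ℓ) * X)))))) (a, b) s
      = (M2 N (Qsym N ℓ) * (Pmat N * (Rconst N q * (M2 N (Gsym N ℓ r lam) *
        (Pmat N * (Rconst N q * X)))))) (a, b) s ∧
    (Pmat N * (Rconst N q * (M2 N (Qsym N ℓ) * (Pmat N * (Rconst N q *
        (M2 N (Qsym N ℓ) * X)))))) (a, b) s
      - (M2 N (Qsym N ℓ) * (Pmat N * (Rconst N q * (M2 N (Qsym N ℓ) *
        (Pmat N * (Rconst N q * X)))))) (a, b) s
      = (q - q⁻¹) * ((Pmat N * (Rconst N q * (M2 N (Qsym N ℓ) * X))) (a, b) s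
        - (M2 N (Qsym N ℓ) * (Pmat N * (Rconst N q * X))) (a, b) s) ∧
    (Pmat N * (Rconst N q * (M2 N (Qsym N ℓ) * (Pmat N * (Rconst N q *
        (M2 N (Gsym N ℓ r lam) * X)))))) (a, b) s
      - (M2 N (Gsym N ℓ r lam) * (Pmat N * (Rconst N q * (M2 N (Qsym N ℓ) *
        (Pmat N * (Rconst N q * X)))))) (a, b) s
      = (q - q⁻¹) * ((M2 N (Qsym N ℓ) * (Pmat N * (Rconst N q *
          (M2 N (Gsym N ℓ r lam) * X)))) (a, b) s
        - (M2 N (Gsym N ℓ r lam) * (Pmat N * (Rconst N q * (M2 N (Qsym N ℓ) * X)))) (a, b) s) := by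
  simp only [braid_mul_apply, M2_Qsym_mul_apply, M2_Gsym_mul_apply N ℓ r lam hlr hr]
  have ha := row_cases N ℓ r lam hlr hr a
  have hb := row_cases N ℓ r lam hlr hr b
  by_cases hab : a = b
  · subst hab
    rcases ha with ha | ha | ha | ha <;> refine ⟨?_, ?_, ?_, ?_⟩ <;>
    · simp (disch := omega) only [ha, if_true, if_false, if_pos, if_neg, lt_self_iff_false]
      first | ring1 | (field_simp; done) | (field_simp; ring1)
  have hne : (a : ℕ) ≠ b := fun h => hab (Fin.ext h)
  have hlt := lt_or_gt_of_ne hne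
  rcases ha with ha | ha | ha | ha
  -- The rows `a` outside the pairs exchanged by `σ`.
  case' inl | inr.inr.inl =>
    rcases hlt with hlt | hlt <;> rcases hb with hb | hb | hb | hb <;>
    first
    | (exfalso; omega)
    | (refine ⟨?_, ?_, ?_, ?_⟩ <;>
        simp (disch := omega) only [ha, hb, if_true, if_pos, if_neg] <;>
        first | ring1 | (field_simp; done) | (field_simp; ring1))
  -- The rows `a` inside such a pair; `b` may be the other element of the pair.
  all_goals
    by_cases hab' : blockRefl N ℓ a = b
    · subst hab'
      clear hb
      refine ⟨?_, ?_, ?_, ?_⟩ <;>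
        simp (disch := omega) only [ha, if_true, if_false, if_pos, if_neg,
          lt_self_iff_false] <;>
        first | ring1 | (field_simp; done) | (field_simp; ring1)
    have hne' : (blockRefl N ℓ a : ℕ) ≠ b := fun h => hab' (Fin.ext h)
    rcases hlt with hlt | hlt <;> rcases lt_or_gt_of_ne hne' with hlt' | hlt' <;>
    rcases hb with hb | hb | hb | hb <;>
    first
    | (exfalso; omega)
    | (refine ⟨?_, ?_, ?_, ?_⟩ <;>
        simp (disch := omega) only [ha, hb, if_true, if_pos, if_neg] <;>
        first | ring1 | (field_simp; done) | (field_simp; ring1))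

/-- braided constant reflection-equation identities for `G` and `Q`,
with `Ř_q = P R_q`, `G2 = I ⊗ G`, `Q2 = I ⊗ Q`. -/
theorem statement12 (N : ℕ) (hN : 2 ≤ N) (q : ℂ) (hq : q ≠ 0)
    (ℓ r : ℕ) (hlr : ℓ < r) (hr : 2 * r ≤ N + ℓ)
    (lam : ℂ) (hlam : lam ≠ 0) :
    (Pmat N * Rconst N q) * M2 N (Gsym N ℓ r lam) * (Pmat N * Rconst N q) * M2 N (Gsym N ℓ r lam)
        = M2 N (Gsym N ℓ r lam) * (Pmat N * Rconst N q) * M2 N (Gsym N ℓ r lam) * (Pmat N * Rconst N q) ∧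
    (Pmat N * Rconst N q) * M2 N (Gsym N ℓ r lam) * (Pmat N * Rconst N q) * M2 N (Qsym N ℓ)
        = M2 N (Qsym N ℓ) * (Pmat N * Rconst N q) * M2 N (Gsym N ℓ r lam) * (Pmat N * Rconst N q) ∧
    (Pmat N * Rconst N q) * M2 N (Qsym N ℓ) * (Pmat N * Rconst N q) * M2 N (Qsym N ℓ)
        - M2 N (Qsym N ℓ) * (Pmat N * Rconst N q) * M2 N (Qsym N ℓ) * (Pmat N * Rconst N q)
      = (q - q⁻¹) • ((Pmat N * Rconst N q) * M2 N (Qsym N ℓ)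
          - M2 N (Qsym N ℓ) * (Pmat N * Rconst N q)) ∧
    (Pmat N * Rconst N q) * M2 N (Qsym N ℓ) * (Pmat N * Rconst N q) * M2 N (Gsym N ℓ r lam)
        - M2 N (Gsym N ℓ r lam) * (Pmat N * Rconst N q) * M2 N (Qsym N ℓ) * (Pmat N * Rconst N q)
      = (q - q⁻¹) • (M2 N (Qsym N ℓ) * (Pmat N * Rconst N q) * M2 N (Gsym N ℓ r lam)
          - M2 N (Gsym N ℓ r lam) * (Pmat N * Rconst N q) * M2 N (Qsym N ℓ)) := by
  have key := braid_identities_apply N q hq ℓ r hlr hr lam hlam 1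
  simp only [mul_one] at key
  simp only [Matrix.mul_assoc]
  refine ⟨?_, ?_, ?_, ?_⟩ <;> ext ⟨a, b⟩ s
  · exact (key a b s).1
  · exact (key a b s).2.1
  · exact (key a b s).2.2.1
  · exact (key a b s).2.2.2

end
end

section
/- The constant antidiagonal matrix K(u) = Σ_{1≤i≤N} E_{i,ī} (with ī = N−i+1) satisfies the cross-conjugated twisted reflection equation (CtRE) for all u, v for which all factors are defined. -/
/-!
Let `J` be the antidiagonal matrix, `d a = (-q) ^ (a + 1)` and `D = diag d`, so that `C = J D`.
The R-matrix is invariant under conjugation by `J ⊗ J` followed by the flip, and its weight-zero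
property lets the diagonal twists in the two copies of `R^∨` be matched.  Cancelling all copies of
`J`, the reflection equation becomes the commutation `R21(x) Y = Y R21(x)`, where
`Y = D2⁻¹ R21(y)^{t1} D2`.

This holds for a structural reason and for independent `x`, `y`.  Let `e` be the projection onto the
span of the vectors `e_a ⊗ e_a`.  The matrix `R21(x)` preserves the range and the kernel of `e` and
is a scalar on the range, whereas `Y` preserves both and is a scalar on the kernel.
Only the shape `f R_q + g P R_{q⁻¹} P` of the R-matrix enters, so the scalars `f`, `g` are kept
arbitrary throughout.
-/

open Matrix
open scoped Kronecker

noncomputable section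

namespace CtREProof

variable {N : ℕ}

lemma sum_Icc_fin {M : Type*} [AddCommMonoid M] (F : ℕ → M) :
    ∑ i ∈ Finset.Icc 1 N, F i = ∑ i : Fin N, F (i + 1) := by
  rw [Fin.sum_univ_eq_sum_range (fun i => F (i + 1)) N, Finset.range_eq_Ico,
    Finset.sum_Ico_add' F 0 N 1]
  rfl

lemma Em_succ (i j a b : Fin N) :
    Em N (i + 1) (j + 1) a b = (if a = i then 1 else 0) * (if b = j then 1 else 0) := by
  simp only [Em, Matrix.of_apply, add_left_inj, Fin.val_inj, ← ite_and, mul_ite, mul_one, mul_zero]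
  congr 1
  exact propext and_comm

lemma Em_rev_right (i a b : Fin N) :
    Em N (i + 1) (N + 1 - (i + 1)) a b = if a = i then (if b = i.rev then 1 else 0) else 0 := by
  have h : N + 1 - ((i : ℕ) + 1) = (i.rev : ℕ) + 1 := by
    rw [Fin.val_rev]; omega
  rw [h, Em_succ]; grind

lemma Em_rev_left (i a b : Fin N) :
    Em N (N + 1 - (i + 1)) (i + 1) a b = if b = i then (if a = i.rev then 1 else 0) else 0 := by
  have h : N + 1 - ((i : ℕ) + 1) = (i.rev : ℕ) + 1 := by
    rw [Fin.val_rev]; omega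
  rw [h, Em_succ]; simp

lemma Pmat_eq : Pmat N = (1 : Matrix (Fin N × Fin N) (Fin N × Fin N) ℂ).submatrix Prod.swap id := by
  ext ⟨a, b⟩ ⟨c, d⟩
  simp only [Pmat, sum_Icc_fin, Matrix.sum_apply, kroneckerMap_apply, Em_succ, submatrix_apply,
    Prod.swap_prod_mk, id, Matrix.one_apply, Prod.mk.injEq]
  simp [ite_and, eq_comm]

lemma Pmat_conj (A : Matrix (Fin N × Fin N) (Fin N × Fin N) ℂ) :
    Pmat N * A * Pmat N = A.submatrix Prod.swap Prod.swap := by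
  have h : (1 : Matrix (Fin N × Fin N) (Fin N × Fin N) ℂ).submatrix Prod.swap id
      = (1 : Matrix (Fin N × Fin N) (Fin N × Fin N) ℂ).submatrix id Prod.swap := by
    ext ⟨a, b⟩ ⟨c, d⟩
    simp [Matrix.one_apply, and_comm]
  rw [Pmat_eq]
  nth_rw 2 [h]
  ext ⟨a, b⟩ ⟨c, d⟩
  simp [Matrix.mul_apply, Matrix.one_apply]

lemma Rconst_apply (q : ℂ) (a b c d : Fin N) :
    Rconst N q (a, b) (c, d)
      = (if a = c ∧ b = d then (if a = b then q else 1) else 0)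
        + (if a = d ∧ b = c then (if a < b then q - q⁻¹ else 0) else 0) := by
  simp only [Rconst, sum_Icc_fin, Matrix.add_apply, Matrix.sum_apply, Matrix.smul_apply,
    kroneckerMap_apply, Em_succ, smul_eq_mul, add_left_inj, Fin.val_inj, add_lt_add_iff_right,
    Fin.val_fin_lt]
  congr 1
  · simp [ite_and, eq_comm]
    grind
  · simp [ite_and, eq_comm]
    grind

/-- The matrix `f R_q + g P R_{q⁻¹} P` with arbitrary scalars `f`, `g`. -/
def Rfg (N : ℕ) (q f g : ℂ) : Matrix (Fin N × Fin N) (Fin N × Fin N) ℂ :=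
  f • Rconst N q + g • (Pmat N * Rconst N q⁻¹ * Pmat N)

lemma Rfg_apply (q f g : ℂ) (a b c d : Fin N) :
    Rfg N q f g (a, b) (c, d)
      = (if a = c ∧ b = d then (if a = b then f * q + g * q⁻¹ else f + g) else 0)
        + (if a = d ∧ b = c then
            (if a < b then f * (q - q⁻¹) else if b < a then g * (q⁻¹ - q) else 0) else 0) := by
  simp only [Rfg, Pmat_conj, Matrix.add_apply, Matrix.smul_apply, submatrix_apply,
    Prod.swap_prod_mk, Rconst_apply, smul_eq_mul, inv_inv]
  grind

/-- Invariance of the R-matrix under conjugation by `J ⊗ J` followed by the flip. -/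
lemma Rfg_rev (q f g : ℂ) (a b c d : Fin N) :
    Rfg N q f g (a.rev, b.rev) (c.rev, d.rev) = Rfg N q f g (b, a) (d, c) := by
  simp only [Rfg_apply, Fin.rev_inj, Fin.rev_lt_rev]
  split_ifs <;> first | rfl | (exfalso; grind)

/-- The diagonal entry `(-q) ^ (a + 1)` of the charge conjugation matrix; the exponent is the
1-based index of `a`. -/
def dg (q : ℂ) (a : Fin N) : ℂ := (-q) ^ ((a : ℕ) + 1)

lemma dg_ne {q : ℂ} (hq : q ≠ 0) (a : Fin N) : dg q a ≠ 0 :=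
  pow_ne_zero _ (neg_ne_zero.2 hq)

lemma Cmat_apply (q : ℂ) (a b : Fin N) :
    Cmat N q a b = if a = b.rev then dg q b else 0 := by
  simp only [Cmat, sum_Icc_fin, Matrix.sum_apply, Matrix.smul_apply, Em_rev_left, smul_eq_mul]
  simp [dg]

lemma K_apply (a b : Fin N) :
    (∑ i ∈ Finset.Icc 1 N, Em N i (N + 1 - i)) a b = if b = a.rev then 1 else 0 := by
  simp only [sum_Icc_fin, Matrix.sum_apply, Em_rev_right]
  simp

/-- The inverse of the charge conjugation matrix. -/
def Cinv (N : ℕ) (q : ℂ) : Matrix (Fin N) (Fin N) ℂ :=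
  Matrix.of fun a b => if b = a.rev then (dg q a)⁻¹ else 0

lemma M2_Cmat_inv {q : ℂ} (hq : q ≠ 0) : (M2 N (Cmat N q))⁻¹ = M2 N (Cinv N q) := by
  apply Matrix.inv_eq_left_inv
  have h : Cinv N q * Cmat N q = 1 := by
    ext a b
    simp [Matrix.mul_apply, Cinv, Cmat_apply, Matrix.one_apply]
    have := dg_ne hq a
    grind
  rw [M2, M2, ← Matrix.mul_kronecker_mul, h]
  simp

/-- Conjugating `A^{t1}` by `1 ⊗ C` reflects the second indices and rescales by ratios of `dg`. -/
lemma C_conj_apply {q : ℂ} (hq : q ≠ 0) (A : Matrix (Fin N × Fin N) (Fin N × Fin N) ℂ)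
    (a b c d : Fin N) :
    ((M2 N (Cmat N q))⁻¹ * t1 N A * M2 N (Cmat N q)) (a, b) (c, d)
      = (dg q b)⁻¹ * dg q d * A (c, b.rev) (a, d.rev) := by
  rw [M2_Cmat_inv hq]
  simp [Matrix.mul_apply, M2, Fintype.sum_prod_type, Matrix.one_apply, Cmat_apply, Cinv, t1]
  ring

lemma K1_mul (A : Matrix (Fin N × Fin N) (Fin N × Fin N) ℂ) :
    M1 N (∑ i ∈ Finset.Icc 1 N, Em N i (N + 1 - i)) * A
      = A.submatrix (fun p => (p.1.rev, p.2)) id := by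
  ext ⟨a, b⟩ ⟨c, d⟩
  simp only [Matrix.mul_apply, M1, Fintype.sum_prod_type, kroneckerMap_apply, K_apply,
    Matrix.one_apply, submatrix_apply, id]
  simp

lemma K2_mul (A : Matrix (Fin N × Fin N) (Fin N × Fin N) ℂ) :
    M2 N (∑ i ∈ Finset.Icc 1 N, Em N i (N + 1 - i)) * A
      = A.submatrix (fun p => (p.1, p.2.rev)) id := by
  ext ⟨a, b⟩ ⟨c, d⟩
  simp only [Matrix.mul_apply, M2, Fintype.sum_prod_type, kroneckerMap_apply, K_apply,
    Matrix.one_apply, submatrix_apply, id]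
  simp

lemma mul_K2 (A : Matrix (Fin N × Fin N) (Fin N × Fin N) ℂ) :
    A * M2 N (∑ i ∈ Finset.Icc 1 N, Em N i (N + 1 - i))
      = A.submatrix id (fun p => (p.1, p.2.rev)) := by
  ext ⟨a, b⟩ ⟨c, d⟩
  simp only [Matrix.mul_apply, M2, Fintype.sum_prod_type, kroneckerMap_apply, K_apply,
    Matrix.one_apply, submatrix_apply, id, @eq_comm _ d]
  simp [Fin.rev_eq_iff]

/-- The matrix `Y = D2⁻¹ R21^{t1} D2`, written through the reflected entries of `R`. -/
def Ymat (N : ℕ) (q f g : ℂ) : Matrix (Fin N × Fin N) (Fin N × Fin N) ℂ :=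
  Matrix.of fun p r =>
    (dg q p.2)⁻¹ * dg q r.2 * Rfg N q f g (r.1.rev, p.2.rev) (p.1.rev, r.2.rev)

/-- The weight-zero property of `R` lets the diagonal twist of `Y` be moved from the second tensor
factor to the first. -/
lemma Ymat_eq {q : ℂ} (hq : q ≠ 0) (f g : ℂ) (a b c d : Fin N) :
    Ymat N q f g (a, b) (c, d)
      = (dg q a)⁻¹ * dg q c * Rfg N q f g (d.rev, a.rev) (b.rev, c.rev) := by
  have ha := dg_ne hq a
  have hb := dg_ne hq b
  simp only [Ymat, Matrix.of_apply, Rfg_rev]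
  simp only [Rfg_apply]
  by_cases h1 : a = c
  · by_cases h2 : b = d
    · subst h1 h2
      grind
    · grind
  · grind

/-- The projection onto the span of the vectors `e_a ⊗ e_a`. -/
def eproj (N : ℕ) : Matrix (Fin N × Fin N) (Fin N × Fin N) ℂ :=
  Matrix.diagonal fun p => if p.1 = p.2 then 1 else 0

lemma R21_mul_eproj (q f g : ℂ) :
    (Rfg N q f g).submatrix Prod.swap Prod.swap * eproj N = (f * q + g * q⁻¹) • eproj N := by
  ext ⟨a, b⟩ ⟨c, d⟩
  simp only [eproj, Matrix.mul_diagonal, submatrix_apply, Prod.swap_prod_mk, Rfg_apply,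
    Matrix.smul_apply, Matrix.diagonal_apply, smul_eq_mul, Prod.mk.injEq]
  grind

lemma eproj_mul_R21 (q f g : ℂ) :
    eproj N * (Rfg N q f g).submatrix Prod.swap Prod.swap = (f * q + g * q⁻¹) • eproj N := by
  ext ⟨a, b⟩ ⟨c, d⟩
  simp only [eproj, Matrix.diagonal_mul, submatrix_apply, Prod.swap_prod_mk, Rfg_apply,
    Matrix.smul_apply, Matrix.diagonal_apply, smul_eq_mul, Prod.mk.injEq]
  grind

/-- `Y` is block diagonal for `eproj` and is the scalar `f + g` on the kernel of `eproj`. -/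
lemma Ymat_decomp {q : ℂ} (hq : q ≠ 0) (f g : ℂ) :
    Ymat N q f g = eproj N * Ymat N q f g * eproj N + (f + g) • (1 - eproj N) := by
  ext ⟨a, b⟩ ⟨c, d⟩
  have hb := dg_ne hq b
  simp only [eproj, Matrix.mul_diagonal, Matrix.diagonal_mul, Matrix.add_apply, Matrix.sub_apply,
    Matrix.smul_apply, Matrix.diagonal_apply, Matrix.one_apply, smul_eq_mul, Prod.mk.injEq]
  simp only [Ymat, Matrix.of_apply, Rfg_rev]
  simp only [Rfg_apply]
  grind

lemma R21_comm_Ymat {q : ℂ} (hq : q ≠ 0) (f g f' g' : ℂ) :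
    (Rfg N q f g).submatrix Prod.swap Prod.swap * Ymat N q f' g'
      = Ymat N q f' g' * (Rfg N q f g).submatrix Prod.swap Prod.swap := by
  have h1 := R21_mul_eproj (N := N) q f g
  have h2 := eproj_mul_R21 (N := N) q f g
  rw [Ymat_decomp hq]
  set R := (Rfg N q f g).submatrix Prod.swap Prod.swap
  simp only [mul_add, add_mul, Matrix.mul_smul, Matrix.smul_mul, mul_sub, sub_mul, mul_one,
    one_mul, ← Matrix.mul_assoc, h1, h2]
  simp only [Matrix.mul_assoc, h2, Matrix.mul_smul]

end CtREProof

open CtREProof in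
/-- the constant antidiagonal matrix `K(u) = Σ_i E_{i,ī}` satisfies the
cross-conjugated twisted reflection equation (CtRE). -/
theorem statement16 (N : ℕ) (hN : 2 ≤ N) (q s : ℂ) (hq : q ≠ 0) (hs : s ^ 2 = -q) :
    IsCtRESol N q s (fun _ => ∑ i ∈ Finset.Icc 1 N, Em N i (N + 1 - i)) := by
  intro u v _ _ _ _ _ _
  have hR : ∀ x, RBJ N q x = Rfg N q (fBJ q x) (fBJ q⁻¹ x⁻¹) := fun _ => rfl
  simp only [CtREeq, R21, Rvee21, Rvee, hR, Pmat_conj]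
  generalize fBJ q (u / v) = f
  generalize fBJ q⁻¹ (u / v)⁻¹ = g
  generalize fBJ q ((s ^ N) ^ 2 * (u * v)⁻¹) = f'
  generalize fBJ q⁻¹ ((s ^ N) ^ 2 * (u * v)⁻¹)⁻¹ = g'
  have key := R21_comm_Ymat (N := N) hq f g f' g'
  -- Each side of the goal is a side of `key` times `J ⊗ J`, i.e. with the column indices reflected.
  trans ((Rfg N q f g).submatrix Prod.swap Prod.swap * Ymat N q f' g').submatrix id
      (fun p => (p.1.rev, p.2.rev))
  · rw [mul_K2, Matrix.mul_assoc, K1_mul]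
    ext ⟨a, b⟩ ⟨c, d⟩
    simp only [submatrix_apply, Matrix.mul_apply (M := submatrix _ _ _), id]
    refine Finset.sum_congr rfl fun p _ => ?_
    rw [C_conj_apply hq]
    simp [Ymat]
  · rw [key, Matrix.mul_assoc, Matrix.mul_assoc, K2_mul, K1_mul]
    ext ⟨a, b⟩ ⟨c, d⟩
    simp only [submatrix_apply, Matrix.mul_apply (M := submatrix _ _ _),
      Matrix.mul_apply (M := Ymat _ _ _ _), id]
    refine Fintype.sum_equiv (Equiv.prodCongr (Equiv.refl _) Fin.revPerm) _ _ ?_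
    rintro ⟨x, y⟩
    simp only [Equiv.prodCongr_apply, Equiv.refl_apply, Prod.map, Fin.revPerm_apply, Prod.swap_prod_mk]
    rw [C_conj_apply hq, Ymat_eq hq, ← Rfg_rev q f g x y c.rev d.rev]
    simp

end
end

section
/- Suppose N is even. Then the constant generalized permutation matrix K(u) = Σ_{1≤i≤N/2} ( E_{2i−1, N−2i+1} + E_{2i, N−2i+2} ) satisfies the cross-conjugated twisted reflection equation (CtRE) for all u, v for which all factors are defined. -/
open Matrix
open scoped Kronecker

noncomputable section

/-!
Up to the scalar `f_q(y)`, `R(y)` is `R_q - y P R_{q⁻¹} P`, whose rows and columns have at most two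
nonzero entries: a diagonal weight `dl` and an off-diagonal weight `gm`. The matrix `K` is the
permutation matrix of the involution `κ a = rev (σ a)`, where `σ` exchanges `2i` and `2i + 1`
(0-based). Put `M = K1 R^∨ K2`. Conjugation by `P` turns `M` into `K2 R^∨21 K1`, so the reflection
equation reads `R21 M = (P M P) R`, and entrywise it becomes the four-term relation
`scalar_identity` between the entries of `M` obtained by permuting `(a, b)` and `(c, d)`.

The entries of `M` split into two regimes, both preserved by these swaps.
* Unless `b = σ a` and `d = σ c`, the entry is `1 - x` times that of the permutation
  `(a, b) ↦ (κ a, κ b)` (`mm_off`). Since `κ` reverses the order of `a` and `b` whenever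
  `b ≠ σ a`, the weights on the two sides agree.
* If `b = σ a` and `d = σ c` (`mm_pair`), the entries carry the powers of `-q` coming from the charge
  conjugation matrix. Within a pair `{a, σ a}` the map `κ` preserves the order, and these powers
  compensate for that; this is a direct check according to the parities of `a` and `c` and the
  relative position of the pair of `a` and the reversed pair of `c`.

The identity `s ^ 2 = -q` only enters through `s ≠ 0`: the relation holds for every nonzero shift of
the spectral parameter.
-/

lemma Em_succ {N : ℕ} (i j a b : Fin N) :
    Em N (i + 1) (j + 1) a b = if a = i ∧ b = j then 1 else 0 := by
  simp [Em, Fin.ext_iff]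

lemma sum_Icc_fin {M : Type*} [AddCommMonoid M] (N : ℕ) (F : ℕ → M) :
    ∑ i ∈ Finset.Icc 1 N, F i = ∑ k : Fin N, F (k + 1) := by
  rw [Fin.sum_univ_eq_sum_range (fun k => F (k + 1)) N, Finset.range_eq_Ico,
    Finset.sum_Ico_add' F 0 N 1]
  rfl

lemma Pmat_eq (N : ℕ) : Pmat N = (1 : Matrix (Fin N × Fin N) (Fin N × Fin N) ℂ).submatrix
    (Equiv.prodComm _ _) id := by
  ext ⟨a, b⟩ ⟨c, d⟩
  simp only [Pmat, sum_Icc_fin, Matrix.sum_apply, kroneckerMap_apply, Em_succ, ite_and]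
  simp [Matrix.one_apply, ite_and, eq_comm]
  split_ifs <;> rfl

lemma Pmat_conj (N : ℕ) (X : Matrix (Fin N × Fin N) (Fin N × Fin N) ℂ) (a b c d : Fin N) :
    (Pmat N * X * Pmat N) (a, b) (c, d) = X (b, a) (d, c) := by
  rw [Pmat_eq]
  simp [Matrix.mul_apply, Matrix.one_apply, Fintype.sum_prod_type, ite_and]

/-- Diagonal weight of the unnormalised R-matrix `R_q - y P R_{q⁻¹} P`. -/
def dl {N : ℕ} (q y : ℂ) (a b : Fin N) : ℂ := if a = b then q - y * q⁻¹ else 1 - y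

/-- Off-diagonal weight (row `(a, b)`, column `(b, a)`) of `R_q - y P R_{q⁻¹} P`;
it vanishes for `a = b`. -/
def gm {N : ℕ} (q y : ℂ) (a b : Fin N) : ℂ :=
  if a < b then q - q⁻¹ else if b < a then y * (q - q⁻¹) else 0

/-- Entries of the unnormalised R-matrix `R_q - y P R_{q⁻¹} P`. -/
def rh {N : ℕ} (q y : ℂ) (p r : Fin N × Fin N) : ℂ :=
  (if p.1 = r.1 ∧ p.2 = r.2 then dl q y p.1 p.2 else 0)
    + (if p.1 = r.2 ∧ p.2 = r.1 then gm q y p.1 p.2 else 0)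

/-- The two normalising factors of `R(y)` are proportional, even at the pole `y = q ^ 2`,
where both take the junk value `0`. -/
lemma fBJ_inv {q y : ℂ} (hq : q ≠ 0) (hy : y ≠ 0) : fBJ q⁻¹ y⁻¹ = -y * fBJ q y := by
  have h : q⁻¹ - q⁻¹⁻¹ * y⁻¹ = (-y)⁻¹ * (q - q⁻¹ * y) := by
    field_simp
    ring
  rw [fBJ, fBJ, h, mul_inv, inv_inv]

lemma RBJ_apply {N : ℕ} {q y : ℂ} (hq : q ≠ 0) (hy : y ≠ 0) (p r : Fin N × Fin N) :
    RBJ N q y p r = fBJ q y * rh q y p r := by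
  obtain ⟨a, b⟩ := p
  obtain ⟨c, d⟩ := r
  rw [RBJ, fBJ_inv hq hy, Matrix.add_apply, Matrix.smul_apply, Matrix.smul_apply, Pmat_conj,
    Rconst_apply, Rconst_apply, smul_eq_mul, smul_eq_mul, mul_comm (-y), mul_assoc, ← mul_add]
  congr 1
  simp only [rh, dl, gm, inv_inv]
  simp only [Fin.ext_iff, Fin.lt_def]
  split_ifs <;> first | ring1 | (exfalso; omega)

/-- Left multiplication by `R21` mixes the rows `(a, b)` and `(b, a)`. -/
lemma R21_mul {N : ℕ} {q y : ℂ} (hq : q ≠ 0) (hy : y ≠ 0)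
    (X : Matrix (Fin N × Fin N) (Fin N × Fin N) ℂ) (a b : Fin N) (r : Fin N × Fin N) :
    (R21 N q y * X) (a, b) r = fBJ q y * (dl q y b a * X (a, b) r + gm q y b a * X (b, a) r) := by
  have h (p : Fin N × Fin N) : R21 N q y (a, b) p = fBJ q y * rh q y (b, a) (p.2, p.1) := by
    rw [R21, Pmat_conj, RBJ_apply hq hy]
  simp only [Matrix.mul_apply, Fintype.sum_prod_type, h, rh, ite_and,
    mul_add, add_mul, Finset.sum_add_distrib]
  simp [mul_assoc]

/-- Right multiplication by `R` mixes the columns `(c, d)` and `(d, c)`. -/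
lemma mul_RBJ {N : ℕ} {q y : ℂ} (hq : q ≠ 0) (hy : y ≠ 0)
    (X : Matrix (Fin N × Fin N) (Fin N × Fin N) ℂ) (c d : Fin N) (p : Fin N × Fin N) :
    (X * RBJ N q y) p (c, d) = fBJ q y * (dl q y c d * X p (c, d) + gm q y d c * X p (d, c)) := by
  simp only [Matrix.mul_apply, Fintype.sum_prod_type, RBJ_apply hq hy, rh, ite_and,
    mul_add, Finset.sum_add_distrib]
  simp [mul_left_comm, mul_comm]
  ring

lemma Cmat_apply (N : ℕ) (q : ℂ) (a b : Fin N) :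
    Cmat N q a b = if a = b.rev then (-q) ^ (b.val + 1) else 0 := by
  have h (k : Fin N) : N + 1 - (k.val + 1) = (k.rev : ℕ) + 1 := by
    rw [Fin.val_rev]; omega
  simp only [Cmat, sum_Icc_fin, h, Matrix.sum_apply, Matrix.smul_apply, Em_succ, smul_eq_mul]
  have h' (k : Fin N) : a = k.rev ∧ b = k ↔ k = b ∧ a = b.rev := by
    constructor <;> rintro ⟨rfl, rfl⟩ <;> simp
  simp [h', ite_and]

lemma M2_Cmat_inv (N : ℕ) {q : ℂ} (hq : q ≠ 0) : (M2 N (Cmat N q))⁻¹ =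
    M2 N (Matrix.of fun a b => if b = a.rev then ((-q) ^ (a.val + 1))⁻¹ else 0) := by
  apply Matrix.inv_eq_right_inv
  rw [M2, M2, ← Matrix.mul_kronecker_mul, mul_one]
  convert Matrix.one_kronecker_one using 2
  ext a b
  simp only [Matrix.mul_apply, Cmat_apply, Matrix.of_apply]
  have hq' : -q ≠ 0 := neg_ne_zero.2 hq
  rw [Finset.sum_eq_single a.rev]
  · rw [Matrix.one_apply]
    by_cases h : a = b
    · simp only [h, Fin.rev_rev, if_true]
      exact mul_inv_cancel₀ (pow_ne_zero _ hq')
    · simp [h, eq_comm]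
  · intro k _ hk
    rw [if_neg, zero_mul]
    rintro rfl
    simp at hk
  · simp

lemma Rvee_apply (N : ℕ) {q : ℂ} (hq : q ≠ 0) (s z : ℂ) (a b c d : Fin N) :
    Rvee N q s z (a, b) (c, d) = ((-q) ^ (b.val + 1))⁻¹
      * RBJ N q ((s ^ N) ^ 2 * z⁻¹) (c, b.rev) (a, d.rev) * (-q) ^ (d.val + 1) := by
  rw [Rvee, M2_Cmat_inv N hq]
  simp [Matrix.mul_apply, Fintype.sum_prod_type, M2, t1, Matrix.one_apply, Cmat_apply]

/-- The fixed-point-free involution exchanging `2i` and `2i + 1` (0-based), i.e. `2i - 1 ↔ 2i`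
in 1-based numbering. -/
def sg {n : ℕ} (a : Fin (n + n)) : Fin (n + n) :=
  ⟨if a.val % 2 = 0 then a + 1 else a - 1, by split_ifs <;> omega⟩

/-- `K` is the permutation matrix of `κ = rev ∘ σ`. -/
lemma K_apply (n : ℕ) (a b : Fin (n + n)) :
    (∑ i ∈ Finset.Icc 1 ((n + n) / 2), (Em (n + n) (2 * i - 1) (n + n - 2 * i + 1)
      + Em (n + n) (2 * i) (n + n - 2 * i + 2))) a b = if b = (sg a).rev then 1 else 0 := by
  rw [Matrix.sum_apply, Finset.sum_eq_single (a.val / 2 + 1)]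
  · simp only [Em, Matrix.add_apply, Matrix.of_apply, Fin.ext_iff, Fin.val_rev, sg]
    split_ifs <;> first | (exfalso; omega) | simp
  · intro i hi hne
    rw [Finset.mem_Icc] at hi
    simp only [Em, Matrix.add_apply, Matrix.of_apply]
    rw [if_neg (by omega), if_neg (by omega), add_zero]
  · intro h
    exfalso
    apply h
    rw [Finset.mem_Icc]
    omega

/-- Entries of `K1 R^∨ K2`, without the scalar normalisation of `R^∨`; here `x` is the
spectral parameter at which the R-matrix inside `R^∨` is evaluated. -/
def mm {n : ℕ} (q x : ℂ) (a b c d : Fin (n + n)) : ℂ :=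
  ((-q) ^ (b.val + 1))⁻¹ * rh q x (c, b.rev) ((sg a).rev, sg d) * (-q) ^ ((sg d).rev.val + 1)

lemma sg_sg {n : ℕ} (a : Fin (n + n)) : sg (sg a) = a := by
  simp only [sg, Fin.ext_iff]
  split_ifs <;> omega

/-- On indices `(a, σ a)`, `(c, σ c)` both the diagonal and the off-diagonal part contribute. -/
lemma mm_pair {n : ℕ} (q x : ℂ) (a c : Fin (n + n)) : mm q x a (sg a) c (sg c) =
    ((-q) ^ ((sg a).val + 1))⁻¹ * ((if c = (sg a).rev then q - x * q⁻¹ else 0)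
      + gm q x c (sg a).rev) * (-q) ^ (c.rev.val + 1) := by
  simp only [mm, rh, sg_sg, dl, and_true, if_true]
  by_cases h : c = (sg a).rev <;> simp [h]

/-- Away from the pairs `(a, σ a)`, only the diagonal part contributes. -/
lemma mm_off {n : ℕ} {q : ℂ} (hq : q ≠ 0) (x : ℂ) {a b c d : Fin (n + n)}
    (h : ¬ (b = sg a ∧ d = sg c)) :
    mm q x a b c d = if c = (sg a).rev ∧ d = (sg b).rev then 1 - x else 0 := by
  have hq' : -q ≠ 0 := neg_ne_zero.2 hq
  have h1 : ¬ (c = sg d ∧ b.rev = (sg a).rev) := by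
    rintro ⟨rfl, hb⟩
    exact h ⟨Fin.rev_injective hb, (sg_sg d).symm⟩
  have h2 : (c = (sg a).rev ∧ b.rev = sg d) ↔ (c = (sg a).rev ∧ d = (sg b).rev) := by
    simp only [Fin.ext_iff, Fin.val_rev, sg]
    split_ifs <;> omega
  simp only [mm, rh, h1, h2, if_false, add_zero]
  split_ifs with hc
  · have h3 : c ≠ b.rev := by
      simp only [Fin.ext_iff, Fin.val_rev, sg, ne_eq] at h hc ⊢
      split_ifs at h hc ⊢ <;> omega
    rw [← (h2.2 hc).2, Fin.rev_rev, dl, if_neg h3, mul_assoc, mul_comm (1 - x),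
      inv_mul_cancel_left₀ (pow_ne_zero _ hq')]
  · simp

/-- The reflection equation at the entry in row `(a, b)` and column `(c, d)`. -/
lemma scalar_identity {n : ℕ} {q : ℂ} (hq : q ≠ 0) (x y : ℂ) (a b c d : Fin (n + n)) :
    dl q y b a * mm q x a b c d + gm q y b a * mm q x b a c d
      = dl q y c d * mm q x b a d c + gm q y d c * mm q x b a c d := by
  have hq' : -q ≠ 0 := neg_ne_zero.2 hq
  by_cases h : b = sg a ∧ d = sg c
  · obtain ⟨rfl, rfl⟩ := h
    have h1 := mm_pair q x a c
    have h2 := mm_pair q x (sg a) c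
    have h3 := mm_pair q x (sg a) (sg c)
    rw [sg_sg] at h2 h3
    rw [sg_sg] at h3
    rw [h1, h2, h3]
    clear h1 h2 h3
    obtain ⟨a, ha⟩ := a
    obtain ⟨c, hc⟩ := c
    -- `{a, σ a} = {2i, 2i + 1}`, and `j` labels the reversal of the pair `{c, σ c}`.
    obtain ⟨i, hi⟩ : ∃ i, i = a / 2 := ⟨_, rfl⟩
    obtain ⟨j, hj⟩ : ∃ j, j = n - 1 - c / 2 := ⟨_, rfl⟩
    have hA : (-q) ^ (2 * i) ≠ 0 := pow_ne_zero _ hq'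
    rcases Nat.mod_two_eq_zero_or_one a with hae | hao <;>
    rcases Nat.mod_two_eq_zero_or_one c with hce | hco
    · have e1 : a = 2 * i := by omega
      have e2 : n + n - (c + 1) + 1 = 2 * j + 1 + 1 := by omega
      have e3 : n + n - (c + 1 + 1) + 1 = 2 * j + 1 := by omega
      simp only [sg, dl, gm, Fin.ext_iff, Fin.val_rev, Fin.lt_def, hae, hce, if_true,
        e2, e3]
      rcases lt_trichotomy i j with hij | hij | hij <;>
      · simp (disch := omega) only [if_pos, if_neg]
        simp only [e1, pow_succ _ (2 * _ + 1), pow_succ _ (2 * _)]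
        generalize (-q) ^ (2 * i) = A at hA ⊢
        field_simp
    · have e1 : a = 2 * i := by omega
      have e2 : n + n - (c + 1) + 1 = 2 * j + 1 := by omega
      have e3 : n + n - (c - 1 + 1) + 1 = 2 * j + 1 + 1 := by omega
      simp only [sg, dl, gm, Fin.ext_iff, Fin.val_rev, Fin.lt_def, hae, hco, if_true, if_false,
        one_ne_zero, e2, e3]
      rcases lt_trichotomy i j with hij | hij | hij <;>
      · simp (disch := omega) only [if_pos, if_neg]
        simp only [e1, pow_succ _ (2 * _ + 1), pow_succ _ (2 * _)]
        generalize (-q) ^ (2 * i) = A at hA ⊢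
        field_simp
        ring
    · have e1 : a = 2 * i + 1 := by omega
      have e2 : n + n - (c + 1) + 1 = 2 * j + 1 + 1 := by omega
      have e3 : n + n - (c + 1 + 1) + 1 = 2 * j + 1 := by omega
      have e4 : 2 * i + 1 - 1 = 2 * i := by omega
      simp only [sg, dl, gm, Fin.ext_iff, Fin.val_rev, Fin.lt_def, hao, hce, if_true, if_false,
        one_ne_zero, e2, e3]
      rcases lt_trichotomy i j with hij | hij | hij <;>
      · simp (disch := omega) only [if_pos, if_neg]
        simp only [e1, e4, pow_succ _ (2 * _ + 1), pow_succ _ (2 * _)]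
        generalize (-q) ^ (2 * i) = A at hA ⊢
        field_simp
        ring
    · have e1 : a = 2 * i + 1 := by omega
      have e2 : n + n - (c + 1) + 1 = 2 * j + 1 := by omega
      have e3 : n + n - (c - 1 + 1) + 1 = 2 * j + 1 + 1 := by omega
      have e4 : 2 * i + 1 - 1 = 2 * i := by omega
      simp only [sg, dl, gm, Fin.ext_iff, Fin.val_rev, Fin.lt_def, hao, hco, if_false,
        one_ne_zero, e2, e3]
      rcases lt_trichotomy i j with hij | hij | hij <;>
      · simp (disch := omega) only [if_pos, if_neg]
        simp only [e1, e4, pow_succ _ (2 * _ + 1), pow_succ _ (2 * _)]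
        generalize (-q) ^ (2 * i) = A at hA ⊢
        field_simp
  · have h2 : ¬ (a = sg b ∧ c = sg d) := by
      rintro ⟨rfl, rfl⟩
      simp [sg_sg] at h
    have h3 : ¬ (a = sg b ∧ d = sg c) := by
      rintro ⟨rfl, rfl⟩
      simp [sg_sg] at h
    rw [mm_off hq x h, mm_off hq x h2, mm_off hq x h3]
    -- `κ` is injective, and it reverses the order of `a` and `b` as `{a, b}` is not a pair
    -- exchanged by `σ` in the situation of `e2`.
    have e1 : (c = (sg a).rev ∧ d = (sg b).rev) → (a = b ↔ c = d) := by
      simp only [Fin.ext_iff, Fin.val_rev, sg]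
      split_ifs <;> omega
    have e2 : (c = (sg b).rev ∧ d = (sg a).rev) → (b < a ↔ d < c) ∧ (a < b ↔ c < d) := by
      simp only [Fin.ext_iff, Fin.val_rev, sg, Fin.lt_def] at h ⊢
      split_ifs at h ⊢ <;> omega
    simp only [and_comm (a := d = _)]
    congr 1
    · split_ifs with hc
      · simp only [dl, eq_comm (a := b), e1 hc]
      · simp
    · split_ifs with hc
      · simp only [gm, e2 hc]
      · simp

/-- for even `N`, the constant generalized permutation matrix
`K(u) = Σ_{1≤i≤N/2} ( E_{2i-1, N-2i+1} + E_{2i, N-2i+2} )` satisfies the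
cross-conjugated twisted reflection equation (CtRE). -/
theorem statement17 (N : ℕ) (hN : 2 ≤ N) (hNe : Even N)
    (q s : ℂ) (hq : q ≠ 0) (hs : s ^ 2 = -q) :
    IsCtRESol N q s
      (fun _ => ∑ i ∈ Finset.Icc 1 (N / 2),
        (Em N (2 * i - 1) (N - 2 * i + 1) + Em N (2 * i) (N - 2 * i + 2))) := by
  obtain ⟨n, rfl⟩ := hNe
  intro u v hu hv _ _ _ _
  have hs0 : s ≠ 0 := by
    rintro rfl
    apply hq
    simpa using hs.symm
  have hx : (s ^ (n + n)) ^ 2 * (u * v)⁻¹ ≠ 0 := by positivity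
  have hy : u / v ≠ 0 := div_ne_zero hu hv
  rw [CtREeq]
  generalize hK : (∑ i ∈ Finset.Icc 1 ((n + n) / 2), (Em (n + n) (2 * i - 1) (n + n - 2 * i + 1)
      + Em (n + n) (2 * i) (n + n - 2 * i + 2))) = K
  have hKa : ∀ a b, K a b = if b = (sg a).rev then 1 else 0 := by
    intro a b
    rw [← hK, K_apply]
  -- The second form uses that `κ` is an involution.
  have hKb : ∀ a b, K a b = if a = (sg b).rev then 1 else 0 := by
    intro a b
    rw [hKa]
    congr 1
    simp only [sg, Fin.ext_iff, Fin.val_rev, eq_iff_iff]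
    split_ifs <;> omega
  have hM : ∀ a b c d, (M1 (n + n) K * Rvee (n + n) q s (u * v) * M2 (n + n) K) (a, b) (c, d)
      = fBJ q ((s ^ (n + n)) ^ 2 * (u * v)⁻¹)
        * mm q ((s ^ (n + n)) ^ 2 * (u * v)⁻¹) a b c d := by
    intro a b c d
    have h1 : (M1 (n + n) K * Rvee (n + n) q s (u * v) * M2 (n + n) K) (a, b) (c, d)
        = Rvee (n + n) q s (u * v) ((sg a).rev, b) (c, (sg d).rev) := by
      rw [Matrix.mul_assoc]
      simp only [Matrix.mul_apply, Fintype.sum_prod_type, M1, M2, kroneckerMap_apply,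
        Matrix.one_apply]
      simp only [hKa a]
      simp only [hKb _ d]
      simp
    rw [h1, Rvee_apply _ hq, RBJ_apply hq hx, mm, Fin.rev_rev]
    ring
  have hM' : ∀ a b c d, (M2 (n + n) K * Rvee21 (n + n) q s (u * v) * M1 (n + n) K) (a, b) (c, d)
      = (M1 (n + n) K * Rvee (n + n) q s (u * v) * M2 (n + n) K) (b, a) (d, c) := by
    intro a b c d
    have h (p r : Fin (n + n) × Fin (n + n)) : Rvee21 (n + n) q s (u * v) p r
        = Rvee (n + n) q s (u * v) (p.2, p.1) (r.2, r.1) := by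
      rw [Rvee21, Pmat_conj]
    simp only [Matrix.mul_assoc]
    simp only [Matrix.mul_apply, Fintype.sum_prod_type, M1, M2, kroneckerMap_apply,
        Matrix.one_apply, h]
    simp
  ext ⟨a, b⟩ ⟨c, d⟩
  rw [Matrix.mul_assoc, Matrix.mul_assoc, ← Matrix.mul_assoc (M1 _ _), R21_mul hq hy,
    mul_RBJ hq hy, hM', hM', hM, hM, hM]
  linear_combination (fBJ q (u / v) * fBJ q ((s ^ (n + n)) ^ 2 * (u * v)⁻¹)) *
    scalar_identity hq ((s ^ (n + n)) ^ 2 * (u * v)⁻¹) (u / v) a b c d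

end
end
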